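/- arXiv:2602.11486 — 2 statements merged into one kernel-verified Lean document; each statement's English description precedes it below -/
import Mathlib

section
/- There exist constants c > 0 and T₀ ∈ ℕ, depending only on δ and Δ, such that: for every Alice value density v_A and every deterministic Alice strategy in the repeated measurable-cut game, there exists a Bob value density v_B (measurable, bounded above and below by positive constants depending only on δ and Δ, with total integral 1) such that for every horizon T ≥ T₀, Alice's Stackelberg regret over T rounds against the myopic Bob with value density v_B is at least c·T/(log T)². -/
open MeasureTheory Set

noncomputable section

attribute [local instance] Classical.propDecidable

/-- A value density: measurable, bounded in `[δ, Δ]` on `[0,1]`, integrating to 1 on `[0,1]`. -/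
def IsValueDensity (δ Δ : ℝ) (v : ℝ → ℝ) : Prop :=
  Measurable v ∧ (∀ x ∈ Set.Icc (0:ℝ) 1, v x ∈ Set.Icc δ Δ) ∧
    (∫ x in Set.Icc (0:ℝ) 1, v x) = 1

/-- The value of a piece `S` under density `v`. -/
def pieceVal (v : ℝ → ℝ) (S : Set ℝ) : ℝ := ∫ x in S, v x

/-- Alice's deterministic strategy in the measurable-cut game: the horizon and the history
of Bob's previous choices determine her next partition, given by the piece `S`
(the other piece being `[0,1] \ S`). -/
abbrev MAliceStrategy := ℕ → List Bool → Set ℝ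

/-- The two pieces of the measurable partition given by `S`. -/
def mPiece (S : Set ℝ) (b : Bool) : Set ℝ :=
  if b then S ∩ Set.Icc 0 1 else Set.Icc 0 1 \ S

/-- Myopic Bob's choice: the piece of larger `V_B`-value, ties broken towards the piece of
smaller `V_A`-value. -/
def mMyopic (vA vB : ℝ → ℝ) (S : Set ℝ) : Bool :=
  if pieceVal vB (mPiece S false) < pieceVal vB (mPiece S true) then true
  else if pieceVal vB (mPiece S true) < pieceVal vB (mPiece S false) then false
  else if pieceVal vA (mPiece S true) ≤ pieceVal vA (mPiece S false) then true
  else false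

/-- The list of myopic Bob's choices in the first `t` rounds. -/
def mChoices (vA vB : ℝ → ℝ) (SA : MAliceStrategy) (T : ℕ) : ℕ → List Bool
  | 0 => []
  | t + 1 =>
      let h := mChoices vA vB SA T t
      h ++ [mMyopic vA vB (SA T h)]

/-- Alice's Stackelberg value in the measurable-cut game: the supremum of `V_A(S)` over
measurable `S ⊆ [0,1]` with `V_B([0,1] \ S) ≥ 1/2`. -/
def mStackelberg (vA vB : ℝ → ℝ) : ℝ :=
  sSup { u : ℝ | ∃ S : Set ℝ, MeasurableSet S ∧ S ⊆ Set.Icc 0 1 ∧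
    1 / 2 ≤ pieceVal vB (Set.Icc 0 1 \ S) ∧ u = pieceVal vA S }

/-- Alice's Stackelberg regret over horizon `T` against the myopic Bob: in each round she
receives the value of the piece Bob did not choose. -/
def mAliceRegret (vA vB : ℝ → ℝ) (SA : MAliceStrategy) (T : ℕ) : ℝ :=
  ∑ t ∈ Finset.range T,
    (mStackelberg vA vB -
      pieceVal vA (mPiece (SA T (mChoices vA vB SA T t))
        (!(mMyopic vA vB (SA T (mChoices vA vB SA T t))))))

/-!
Bob discounts a set `A` worth `2/3` to Alice: his density is `3/4 * vA` on `A` and `3/2 * vA` off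
`A`. The set `A` is then worth exactly `1/2` to him, so Alice's Stackelberg value is at least
`2/3`, but she only comes close to it with pieces that correlate with `A`. To prevent that, fix
disjoint layers `D 0, D 1, …` of values `1/2, 1/4, …` and let `A` fill exactly the proportion `2/3`
of `D j ∩ S` for each of finitely many pieces `S` belonging to the stages `≤ j`. A piece of stage
`k` is independent of `A` inside the tail of the layers from `k` on, whose value is `2⁻ᵏ`, and so a
piece that Bob is willing to leave is worth at most `2/3 - 2⁻ᵏ / 6` to Alice.

With horizon `T` a deterministic strategy offers finitely many pieces, and these may be assigned to
a stage `κ T` that grows as slowly as we please. The regret is thus at least `T * g T` for any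
prescribed rate `g → 0`; the rate of the theorem is `g T = 1 / (log T)²`.
-/

section ProportionalParts

variable {α : Type*} [MeasurableSpace α] {μ : Measure α} {r : ℝ} {F : Set (Set α)}

lemma measureReal_iUnion_eq_tsum {ι : Type*} [Countable ι] [IsFiniteMeasure μ] {s : ι → Set α}
    (hs : ∀ i, MeasurableSet (s i)) (hd : Pairwise (Function.onFun Disjoint s)) :
    μ.real (⋃ i, s i) = ∑' i, μ.real (s i) := by
  simp only [measureReal_def, measure_iUnion hd hs,
    ENNReal.tsum_toReal_eq fun i => measure_ne_top μ (s i)]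

/-- `μ` is divisible (Sierpiński's property of nonatomic measures): every measurable set has
measurable subsets of every intermediate measure. -/
def IsDivisible (μ : Measure α) : Prop :=
  ∀ ⦃M⦄, MeasurableSet M → ∀ c ∈ Icc 0 (μ.real M), ∃ N ⊆ M, MeasurableSet N ∧ μ.real N = c

/-- `N` is a proportional part of `M`: a measurable subset that fills the proportion `r` of `M`,
and also of `M ∩ S` for each `S` in the family `F`. -/
structure IsProportionalPart (μ : Measure α) (r : ℝ) (F : Set (Set α)) (N M : Set α) : Prop where
  subset : N ⊆ M
  measurableSet : MeasurableSet N
  measureReal_inter : ∀ S ∈ insert univ F, μ.real (N ∩ S) = r * μ.real (M ∩ S)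

namespace IsProportionalPart

variable {N M S : Set α}

lemma measureReal_eq (h : IsProportionalPart μ r F N M) : μ.real N = r * μ.real M := by
  simpa using h.measureReal_inter univ (mem_insert _ _)

protected lemma mono {G : Set (Set α)} (h : IsProportionalPart μ r F N M) (hG : G ⊆ F) :
    IsProportionalPart μ r G N M :=
  ⟨h.subset, h.measurableSet, fun S hS => h.measureReal_inter S (insert_subset_insert hG hS)⟩

protected lemma insert (h : IsProportionalPart μ r F N M)
    (hS : μ.real (N ∩ S) = r * μ.real (M ∩ S)) :
    IsProportionalPart μ r (insert S F) N M := by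
  refine ⟨h.subset, h.measurableSet, fun R hR => ?_⟩
  rcases hR with rfl | rfl | hR
  · exact h.measureReal_inter univ (mem_insert _ _)
  · exact hS
  · exact h.measureReal_inter R (mem_insert_of_mem _ hR)

lemma insert_of_subset (h : IsProportionalPart μ r F N M) (hS : M ⊆ S) :
    IsProportionalPart μ r (insert S F) N M :=
  h.insert <| by
    rw [inter_eq_left.2 hS, inter_eq_left.2 (h.subset.trans hS), h.measureReal_eq]

lemma insert_of_disjoint (h : IsProportionalPart μ r F N M) (hS : Disjoint M S) :
    IsProportionalPart μ r (insert S F) N M :=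
  h.insert <| by simp [hS.inter_eq, (hS.mono_left h.subset).inter_eq]

protected lemma iUnion {ι : Type*} [Countable ι] [IsFiniteMeasure μ] {N M : ι → Set α}
    (hF : ∀ S ∈ F, MeasurableSet S) (hM : ∀ i, MeasurableSet (M i))
    (hd : Pairwise (Function.onFun Disjoint M))
    (h : ∀ i, IsProportionalPart μ r F (N i) (M i)) :
    IsProportionalPart μ r F (⋃ i, N i) (⋃ i, M i) := by
  refine ⟨iUnion_mono fun i => (h i).subset, .iUnion fun i => (h i).measurableSet, fun S hS => ?_⟩
  have hSm : MeasurableSet S := by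
    rcases hS with rfl | hS
    exacts [.univ, hF S hS]
  have hMS : Pairwise (Function.onFun Disjoint fun i => M i ∩ S) := fun i j hij =>
    (hd hij).mono inter_subset_left inter_subset_left
  have hNS : Pairwise (Function.onFun Disjoint fun i => N i ∩ S) := fun i j hij =>
    (hMS hij).mono (inter_subset_inter_left S (h i).subset)
      (inter_subset_inter_left S (h j).subset)
  calc μ.real ((⋃ i, N i) ∩ S) = ∑' i, μ.real (N i ∩ S) := by
        rw [iUnion_inter, measureReal_iUnion_eq_tsum (fun i => (h i).measurableSet.inter hSm) hNS]
    _ = ∑' i, r * μ.real (M i ∩ S) := tsum_congr fun i => (h i).measureReal_inter S hS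
    _ = r * μ.real ((⋃ i, M i) ∩ S) := by
        rw [tsum_mul_left, iUnion_inter,
          measureReal_iUnion_eq_tsum (fun i => (hM i).inter hSm) hMS]

protected lemma union [IsFiniteMeasure μ] {N₁ N₂ M₁ M₂ : Set α} (hF : ∀ S ∈ F, MeasurableSet S)
    (hM₁ : MeasurableSet M₁) (hM₂ : MeasurableSet M₂) (hd : Disjoint M₁ M₂)
    (h₁ : IsProportionalPart μ r F N₁ M₁) (h₂ : IsProportionalPart μ r F N₂ M₂) :
    IsProportionalPart μ r F (N₁ ∪ N₂) (M₁ ∪ M₂) := by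
  rw [union_eq_iUnion, union_eq_iUnion]
  exact IsProportionalPart.iUnion hF (Bool.forall_bool.2 ⟨hM₂, hM₁⟩)
    (pairwise_disjoint_on_bool.2 hd) (Bool.forall_bool.2 ⟨h₂, h₁⟩)

end IsProportionalPart

namespace IsDivisible

lemma exists_isProportionalPart [IsFiniteMeasure μ] (hμ : IsDivisible μ) (hr : r ∈ Icc 0 1)
    (hfin : F.Finite) (hF : ∀ S ∈ F, MeasurableSet S) {M : Set α} (hM : MeasurableSet M) :
    ∃ N, IsProportionalPart μ r F N M := by
  induction F, hfin using Set.Finite.induction_on generalizing M with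
  | empty =>
    obtain ⟨N, hNM, hN, hval⟩ := hμ hM (r * μ.real M)
      ⟨mul_nonneg hr.1 measureReal_nonneg, mul_le_of_le_one_left measureReal_nonneg hr.2⟩
    exact ⟨N, hNM, hN, by simpa using hval⟩
  | @insert S F _ _ ih =>
    have hS : MeasurableSet S := hF S (mem_insert _ _)
    have ih := @ih fun R hR => hF R (mem_insert_of_mem _ hR)
    obtain ⟨N₁, h₁⟩ := ih (hM.inter hS)
    obtain ⟨N₂, h₂⟩ := ih (hM.diff hS)
    rw [← inter_union_sdiff M S]
    exact ⟨N₁ ∪ N₂, .union hF (hM.inter hS) (hM.diff hS)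
      (disjoint_sdiff_right.mono_left inter_subset_right)
      (h₁.insert_of_subset inter_subset_right) (h₂.insert_of_disjoint disjoint_sdiff_left)⟩

lemma exists_pairwise_disjoint_measureReal_eq [IsProbabilityMeasure μ] (hμ : IsDivisible μ) :
    ∃ D : ℕ → Set α, (∀ k, MeasurableSet (D k)) ∧ Pairwise (Function.onFun Disjoint D) ∧
      ∀ k, μ.real (D k) = (1 / 2) ^ k / 2 := by
  have hhalf (M : {M : Set α // MeasurableSet M}) :
      ∃ N : {N : Set α // MeasurableSet N}, N.1 ⊆ M.1 ∧ μ.real N.1 = μ.real M.1 / 2 := by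
    have h0 : 0 ≤ μ.real M.1 := measureReal_nonneg
    obtain ⟨N, hNM, hN, hval⟩ := hμ M.2 (μ.real M.1 / 2) ⟨by linarith, by linarith⟩
    exact ⟨⟨N, hN⟩, hNM, hval⟩
  choose half hsub hval using hhalf
  let M : ℕ → {M : Set α // MeasurableSet M} := fun k => half^[k] ⟨univ, .univ⟩
  have hsucc (k) : M (k + 1) = half (M k) := Function.iterate_succ_apply' ..
  have hstep (k) : (M (k + 1)).1 ⊆ (M k).1 := hsucc k ▸ hsub (M k)
  have hanti : Antitone fun k => (M k).1 := antitone_nat_of_succ_le hstep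
  have hM (k) : μ.real (M k).1 = (1 / 2) ^ k := by
    induction k with
    | zero => simp [M]
    | succ k ih => rw [hsucc, hval, ih, pow_succ]; ring
  refine ⟨fun k => (M k).1 \ (M (k + 1)).1, fun k => (M k).2.diff (M (k + 1)).2,
    (pairwise_disjoint_on _).2 fun i j hij => ?_, fun k => ?_⟩
  · exact disjoint_sdiff_left.mono_right (sdiff_subset.trans (hanti hij))
  · rw [measureReal_sdiff (hstep k) (M (k + 1)).2, hM, hM, pow_succ]
    ring

lemma exists_forall_isProportionalPart_inter [IsProbabilityMeasure μ] (hμ : IsDivisible μ)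
    (hr : r ∈ Icc 0 1) {F : ℕ → Set (Set α)} (hfin : ∀ k, (F k).Finite)
    (hF : ∀ k, ∀ S ∈ F k, MeasurableSet S) :
    ∃ A, MeasurableSet A ∧ μ.real A = r ∧ ∀ k, ∃ M, MeasurableSet M ∧ μ.real M = (1 / 2) ^ k ∧
      IsProportionalPart μ r (F k) (A ∩ M) M := by
  obtain ⟨D, hD, hdisj, hDval⟩ := hμ.exists_pairwise_disjoint_measureReal_eq
  have hpart (j) : ∃ N, IsProportionalPart μ r (⋃ i ≤ j, F i) N (D j) :=
    hμ.exists_isProportionalPart hr ((finite_Iic j).biUnion fun i _ => hfin i)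
      (by simpa using fun S i _ hS => hF i S hS) (hD j)
  choose N hN using hpart
  have htail (k) : IsProportionalPart μ r (F k) (⋃ j, N (k + j)) (⋃ j, D (k + j)) :=
    .iUnion (hF k) (fun j => hD _) (hdisj.comp_of_injective (add_right_injective k)) fun j =>
      (hN (k + j)).mono (subset_biUnion_of_mem (u := F) (Nat.le_add_right k j))
  have htail_val (k) : μ.real (⋃ j, D (k + j)) = (1 / 2) ^ k := by
    rw [measureReal_iUnion_eq_tsum (fun j => hD _)
      (hdisj.comp_of_injective (add_right_injective k)), ← tsum_geometric_two' ((1 / 2) ^ k : ℝ)]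
    refine tsum_congr fun j => ?_
    rw [hDval, pow_add, one_div_pow 2 j]
    ring
  have hinter (k) : (⋃ j, N j) ∩ ⋃ j, D (k + j) = ⋃ j, N (k + j) := by
    refine Subset.antisymm (fun x hx => ?_) (subset_inter
      (iUnion_subset fun j => subset_iUnion N (k + j)) (htail k).subset)
    obtain ⟨i, hi⟩ := mem_iUnion.1 hx.1
    obtain ⟨j, hj⟩ := mem_iUnion.1 hx.2
    obtain rfl : i = k + j := hdisj.eq (not_disjoint_iff.2 ⟨x, (hN i).subset hi, hj⟩)
    exact mem_iUnion.2 ⟨j, hi⟩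
  have hA : ⋃ j, N (0 + j) = ⋃ j, N j := by simp only [zero_add]
  refine ⟨⋃ j, N j, .iUnion fun j => (hN j).measurableSet, ?_, fun k =>
    ⟨⋃ j, D (k + j), .iUnion fun j => hD _, htail_val k, hinter k ▸ htail k⟩⟩
  simpa only [htail_val, hA, pow_zero, mul_one] using (htail 0).measureReal_eq

end IsDivisible

lemma IsProportionalPart.measureReal_le_of_discounted_le_half [IsProbabilityMeasure μ]
    {A M P : Set α} {ε : ℝ} (h : IsProportionalPart μ (2 / 3) F (A ∩ M) M) (hP : P ∈ F)
    (hA : MeasurableSet A) (hM : MeasurableSet M) (hAval : μ.real A = 2 / 3) (hMval : μ.real M = ε)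
    (hle : 3 / 4 * μ.real (P ∩ A) + 3 / 2 * μ.real (P \ A) ≤ 1 / 2) :
    μ.real P ≤ 2 / 3 - ε / 6 := by
  have hin : μ.real (P ∩ A ∩ M) = 2 / 3 * μ.real (P ∩ M) := by
    rw [inter_assoc, inter_comm P, h.measureReal_inter P (mem_insert_of_mem _ hP), inter_comm M]
  have hAM : μ.real (A ∩ M) = 2 / 3 * ε := hMval ▸ h.measureReal_eq
  have hout_le_P : μ.real ((P ∩ A) \ M) ≤ μ.real (P \ M) :=
    measureReal_mono (sdiff_subset_sdiff_left inter_subset_left)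
  have hout_le_A : μ.real ((P ∩ A) \ M) ≤ μ.real (A \ M) :=
    measureReal_mono (sdiff_subset_sdiff_left inter_subset_right)
  have hPA : μ.real (P ∩ A) ≤ 2 / 3 * μ.real P + 2 / 9 * (1 - ε) := by
    linarith [measureReal_inter_add_sdiff (μ := μ) (s := P) hM,
      measureReal_inter_add_sdiff (μ := μ) (s := P ∩ A) hM,
      measureReal_inter_add_sdiff (μ := μ) (s := A) hM]
  linarith [measureReal_inter_add_sdiff (μ := μ) (s := P) hA]

end ProportionalParts

section NonatomicMeasures

variable (μ : Measure ℝ)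

lemma tendsto_measureReal_Iic_atBot :
    Filter.Tendsto (fun x => μ.real (Iic x)) Filter.atBot (nhds 0) := by
  simpa using tendsto_integral_Iic_zero (μ := μ) (f := fun _ => (1 : ℝ)) Filter.tendsto_id

variable [IsFiniteMeasure μ]

lemma continuous_measureReal_Iic [NullSingletonClass μ] : Continuous fun x => μ.real (Iic x) := by
  have hprim (x : ℝ) : μ.real (Iic x) = μ.real (Iic 0) + ∫ _ in (0 : ℝ)..x, 1 ∂μ := by
    have h := intervalIntegral.integral_Iic_sub_Iic (μ := μ) (f := fun _ => (1 : ℝ)) (a := 0)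
      (b := x) (integrable_const 1).integrableOn (integrable_const 1).integrableOn
    simp only [setIntegral_const, smul_eq_mul, mul_one] at h
    linarith
  exact (continuous_const.add (intervalIntegral.continuous_primitive
    (fun _ _ => intervalIntegrable_const) 0)).congr fun x => (hprim x).symm

lemma tendsto_measureReal_Iic_atTop :
    Filter.Tendsto (fun x => μ.real (Iic x)) Filter.atTop (nhds (μ.real univ)) :=
  (ENNReal.tendsto_toReal (measure_ne_top _ _)).comp (tendsto_measure_Iic_atTop μ)

lemma isDivisible_of_nullSingletonClass [NullSingletonClass μ] : IsDivisible μ := by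
  intro M hM c hc
  rcases hc.1.eq_or_lt with rfl | hc₀
  · exact ⟨∅, empty_subset M, .empty, measureReal_empty⟩
  rcases hc.2.eq_or_lt with rfl | hc₁
  · exact ⟨M, Subset.rfl, hM, rfl⟩
  obtain ⟨x, -, hx⟩ := isPreconnected_univ.intermediate_value_Ioo (l₁ := Filter.atBot)
    (l₂ := Filter.atTop) (by simp) (by simp)
    (continuous_measureReal_Iic (μ.restrict M)).continuousOn
    (tendsto_measureReal_Iic_atBot _) (tendsto_measureReal_Iic_atTop _)
    ⟨hc₀, by simpa using hc₁⟩
  exact ⟨Iic x ∩ M, inter_subset_right, measurableSet_Iic.inter hM,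
    by simpa only [measureReal_restrict_apply measurableSet_Iic] using hx⟩

end NonatomicMeasures

section ValueMeasure

variable {δ Δ : ℝ} {v : ℝ → ℝ} {A P : Set ℝ}

lemma IsValueDensity.integrableOn (hv : IsValueDensity δ Δ v) : IntegrableOn v (Icc 0 1) :=
  .of_integral_ne_zero (by rw [hv.2.2]; exact one_ne_zero)

/-- The measure on the line whose density is `v` on the cake and `0` off it. -/
def valueMeasure (v : ℝ → ℝ) : Measure ℝ :=
  (volume.restrict (Icc 0 1)).withDensity fun x => ENNReal.ofReal (v x)

instance : NullSingletonClass (valueMeasure v) := nullSingletonClass_withDensity _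

lemma IsValueDensity.valueMeasure_real (hv : IsValueDensity δ Δ v) (hδ : 0 ≤ δ)
    (hP : MeasurableSet P) : (valueMeasure v).real P = pieceVal v (P ∩ Icc 0 1) := by
  have hnn : 0 ≤ᵐ[volume.restrict (P ∩ Icc 0 1)] v :=
    ae_restrict_of_ae_restrict_of_subset inter_subset_right <|
      ae_restrict_of_forall_mem measurableSet_Icc fun x hx => hδ.trans (hv.2.1 x hx).1
  rw [pieceVal, integral_eq_lintegral_of_nonneg_ae hnn hv.1.aestronglyMeasurable, measureReal_def,
    valueMeasure, withDensity_apply _ hP, Measure.restrict_restrict hP]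

lemma IsValueDensity.isProbabilityMeasure (hv : IsValueDensity δ Δ v) (hδ : 0 ≤ δ) :
    IsProbabilityMeasure (valueMeasure v) := by
  rw [isProbabilityMeasure_iff_real, hv.valueMeasure_real hδ .univ, univ_inter]
  exact hv.2.2

/-- Bob's density: Alice's density `v`, discounted on `A` and increased off `A`. The factors are
such that a set `A` worth `2 / 3` to Alice is worth `1 / 2` to Bob, and so is its complement. -/
def bobDensity (A : Set ℝ) (v : ℝ → ℝ) : ℝ → ℝ :=
  A.piecewise (fun x => 3 / 4 * v x) (fun x => 3 / 2 * v x)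

lemma pieceVal_bobDensity (hv : IsValueDensity δ Δ v) (hδ : 0 ≤ δ) (hA : MeasurableSet A)
    (hP : MeasurableSet P) : pieceVal (bobDensity A v) (P ∩ Icc 0 1) =
      3 / 4 * (valueMeasure v).real (P ∩ A) + 3 / 2 * (valueMeasure v).real (P \ A) := by
  have hint : IntegrableOn v (P ∩ Icc 0 1) := hv.integrableOn.mono_set inter_subset_right
  have hin : A ∩ (P ∩ Icc 0 1) = P ∩ A ∩ Icc 0 1 := by rw [← inter_assoc, inter_comm A]
  have hout : Aᶜ ∩ (P ∩ Icc 0 1) = P \ A ∩ Icc 0 1 := by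
    rw [← inter_assoc, inter_comm Aᶜ]; rfl
  rw [pieceVal, bobDensity, integral_piecewise hA (hint.const_mul _).integrableOn
    (hint.const_mul _).integrableOn, Measure.restrict_restrict hA,
    Measure.restrict_restrict hA.compl, integral_const_mul, integral_const_mul, hin, hout,
    hv.valueMeasure_real hδ (hP.inter hA), hv.valueMeasure_real hδ (hP.diff hA), pieceVal, pieceVal]

lemma isValueDensity_bobDensity (hv : IsValueDensity δ Δ v) (hδ : 0 ≤ δ) (hA : MeasurableSet A)
    (hAval : (valueMeasure v).real A = 2 / 3) :
    IsValueDensity (3 / 4 * δ) (3 / 2 * Δ) (bobDensity A v) := by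
  have := hv.isProbabilityMeasure hδ
  refine ⟨(hv.1.const_mul _).piecewise hA (hv.1.const_mul _), fun x hx => ?_, ?_⟩
  · obtain ⟨hδv, hvΔ⟩ := hv.2.1 x hx
    by_cases hxA : x ∈ A
    · rw [bobDensity, piecewise_eq_of_mem _ _ _ hxA]
      constructor <;> linarith
    · rw [bobDensity, piecewise_eq_of_notMem _ _ _ hxA]
      constructor <;> linarith
  · have htotal := pieceVal_bobDensity hv hδ hA .univ
    rw [univ_inter, univ_inter, ← compl_eq_univ_sdiff, probReal_compl_eq_one_sub hA, hAval,
      pieceVal] at htotal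
    rw [htotal]
    norm_num

lemma pieceVal_le_mStackelberg {vB : ℝ → ℝ} (hv : IsValueDensity δ Δ v) (hδ : 0 ≤ δ)
    (hP : MeasurableSet P) (hsub : P ⊆ Icc 0 1) (hB : 1 / 2 ≤ pieceVal vB (Icc 0 1 \ P)) :
    pieceVal v P ≤ mStackelberg v vB := by
  refine le_csSup ⟨1, ?_⟩ ⟨P, hP, hsub, hB, rfl⟩
  rintro _ ⟨S, hS, hS01, -, rfl⟩
  have := hv.isProbabilityMeasure hδ
  rw [← inter_eq_left.2 hS01, ← hv.valueMeasure_real hδ hS]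
  exact measureReal_le_one

lemma two_thirds_le_mStackelberg_bobDensity (hv : IsValueDensity δ Δ v) (hδ : 0 ≤ δ)
    (hA : MeasurableSet A) (hAval : (valueMeasure v).real A = 2 / 3) :
    2 / 3 ≤ mStackelberg v (bobDensity A v) := by
  have := hv.isProbabilityMeasure hδ
  rw [← hAval, hv.valueMeasure_real hδ hA]
  refine pieceVal_le_mStackelberg hv hδ (hA.inter measurableSet_Icc) inter_subset_right ?_
  have hcompl : Icc 0 1 \ (A ∩ Icc 0 1) = Aᶜ ∩ Icc 0 1 := by
    rw [sdiff_inter_self_eq_sdiff, sdiff_eq_compl_inter]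
  rw [hcompl, pieceVal_bobDensity hv hδ hA hA.compl, compl_inter_self, measureReal_empty,
    disjoint_compl_left.sdiff_eq_left, probReal_compl_eq_one_sub hA, hAval]
  norm_num

lemma exists_density_forall_pieceVal_le (hv : IsValueDensity δ Δ v) (hδ : 0 ≤ δ)
    {F : ℕ → Set (Set ℝ)} (hfin : ∀ k, (F k).Finite)
    (hF : ∀ k, ∀ P ∈ F k, MeasurableSet P ∧ P ⊆ Icc 0 1) :
    ∃ vB, IsValueDensity (3 / 4 * δ) (3 / 2 * Δ) vB ∧ ∀ k, ∀ P ∈ F k, pieceVal vB P ≤ 1 / 2 →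
      pieceVal v P ≤ mStackelberg v vB - (1 / 2) ^ k / 6 := by
  have := hv.isProbabilityMeasure hδ
  obtain ⟨A, hA, hAval, hstage⟩ := (isDivisible_of_nullSingletonClass
    (valueMeasure v)).exists_forall_isProportionalPart_inter (r := 2 / 3) (by norm_num) hfin
    fun k P hP => (hF k P hP).1
  refine ⟨bobDensity A v, isValueDensity_bobDensity hv hδ hA hAval, fun k P hP hle => ?_⟩
  obtain ⟨M, hM, hMval, hpart⟩ := hstage k
  obtain ⟨hPm, hP01⟩ := hF k P hP
  rw [← inter_eq_left.2 hP01, pieceVal_bobDensity hv hδ hA hPm] at hle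
  rw [← inter_eq_left.2 hP01, ← hv.valueMeasure_real hδ hPm]
  linarith [hpart.measureReal_le_of_discounted_le_half hP hA hM hAval hMval hle,
    two_thirds_le_mStackelberg_bobDensity hv hδ hA hAval]

end ValueMeasure

section Game

variable {δ Δ : ℝ} {vA vB : ℝ → ℝ} {SA : MAliceStrategy} {S : Set ℝ} {T : ℕ}

lemma measurableSet_mPiece (hS : MeasurableSet S) (b : Bool) : MeasurableSet (mPiece S b) := by
  cases b
  exacts [measurableSet_Icc.diff hS, hS.inter measurableSet_Icc]

lemma mPiece_subset_Icc (S : Set ℝ) (b : Bool) : mPiece S b ⊆ Icc 0 1 := by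
  cases b
  exacts [sdiff_subset, inter_subset_right]

lemma pieceVal_mPiece_not_mMyopic_le_half (vA : ℝ → ℝ) (hB : IsValueDensity δ Δ vB)
    (hS : MeasurableSet S) : pieceVal vB (mPiece S (!mMyopic vA vB S)) ≤ 1 / 2 := by
  have hsum : pieceVal vB (mPiece S true) + pieceVal vB (mPiece S false) = 1 := by
    rw [← hB.2.2, ← integral_inter_add_sdiff hS hB.integrableOn, inter_comm]
    rfl
  unfold mMyopic
  split_ifs <;> simp only [Bool.not_true, Bool.not_false] <;> linarith

lemma length_mChoices (vA vB : ℝ → ℝ) (SA : MAliceStrategy) (T t : ℕ) :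
    (mChoices vA vB SA T t).length = t := by
  induction t with
  | zero => rfl
  | succ t ih => rw [mChoices, List.length_append, ih, List.length_singleton]

/-- The pieces that Alice may be left with, against any Bob, in a game of horizon `T`. -/
def offeredPieces (SA : MAliceStrategy) (T : ℕ) : Set (Set ℝ) :=
  image2 (fun h b => mPiece (SA T h) b) {h | h.length < T} univ

lemma finite_offeredPieces (SA : MAliceStrategy) (T : ℕ) : (offeredPieces SA T).Finite :=
  (List.finite_length_lt Bool T).image2 _ finite_univ

lemma mul_le_mAliceRegret (hSA : ∀ h, MeasurableSet (SA T h)) (hB : IsValueDensity δ Δ vB) {c : ℝ}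
    (hc : ∀ P ∈ offeredPieces SA T, pieceVal vB P ≤ 1 / 2 →
      pieceVal vA P ≤ mStackelberg vA vB - c) :
    T * c ≤ mAliceRegret vA vB SA T := by
  have hround : ∀ t ∈ Finset.range T, c ≤ mStackelberg vA vB -
      pieceVal vA (mPiece (SA T (mChoices vA vB SA T t))
        (!mMyopic vA vB (SA T (mChoices vA vB SA T t)))) := by
    intro t ht
    have hlen : (mChoices vA vB SA T t).length < T := by
      rw [length_mChoices]
      exact Finset.mem_range.1 ht
    exact le_sub_comm.1 <| hc _ (mem_image2_of_mem hlen (mem_univ _))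
      (pieceVal_mPiece_not_mMyopic_le_half vA hB (hSA _))
  have hsum := Finset.card_nsmul_le_sum _ _ _ hround
  rwa [Finset.card_range, nsmul_eq_mul] at hsum

end Game

lemma exists_tendsto_atTop_eventually_le {g a : ℕ → ℝ} (hg : Filter.Tendsto g Filter.atTop (nhds 0))
    (ha : ∀ k, 0 < a k) :
    ∃ κ : ℕ → ℕ, Filter.Tendsto κ Filter.atTop Filter.atTop ∧
      ∀ᶠ n in Filter.atTop, g n ≤ a (κ n) := by
  have hsmall (k) : ∀ᶠ n in Filter.atTop, g n ≤ a k := hg.eventually_le_const (ha k)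
  refine ⟨fun n => Nat.findGreatest (fun k => g n ≤ a k) n, Filter.tendsto_atTop.2 fun k => ?_, ?_⟩
  · filter_upwards [Filter.eventually_ge_atTop k, hsmall k] with n hkn hn
    exact Nat.le_findGreatest hkn hn
  · filter_upwards [hsmall 0] with n hn
    exact Nat.findGreatest_spec (P := fun k => g n ≤ a k) (Nat.zero_le n) hn

theorem measurable_cut_myopic_lower_general (δ Δ : ℝ) (hδ : 0 ≤ δ) {g : ℕ → ℝ}
    (hg : Filter.Tendsto g Filter.atTop (nhds 0)) :
    ∃ T₀ : ℕ, ∀ vA : ℝ → ℝ, IsValueDensity δ Δ vA →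
      ∀ SA : MAliceStrategy, (∀ T h, MeasurableSet (SA T h)) →
        ∃ vB : ℝ → ℝ, IsValueDensity (3 / 4 * δ) (3 / 2 * Δ) vB ∧
          ∀ T : ℕ, T₀ ≤ T → T * g T ≤ mAliceRegret vA vB SA T := by
  obtain ⟨κ, hκ, hgκ⟩ := exists_tendsto_atTop_eventually_le (a := fun k => (1 / 2) ^ k / 6) hg
    fun k => by positivity
  obtain ⟨T₀, hT₀⟩ := Filter.eventually_atTop.1 hgκ
  refine ⟨T₀, fun vA hA SA hSA => ?_⟩
  let F : ℕ → Set (Set ℝ) := fun k => ⋃ T ∈ κ ⁻¹' {k}, offeredPieces SA T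
  have hfin (k) : (F k).Finite := by
    rw [← Nat.cofinite_eq_atTop] at hκ
    have : Filter.TendstoCofinite κ := ⟨hκ⟩
    exact (Filter.TendstoCofinite.finite_preimage_singleton κ k).biUnion fun T _ =>
      finite_offeredPieces SA T
  have hF (k) : ∀ P ∈ F k, MeasurableSet P ∧ P ⊆ Icc 0 1 := by
    intro P hP
    obtain ⟨T, -, h, -, b, -, rfl⟩ := mem_iUnion₂.1 hP
    exact ⟨measurableSet_mPiece (hSA T h) b, mPiece_subset_Icc _ b⟩
  obtain ⟨vB, hB, hgap⟩ := exists_density_forall_pieceVal_le hA hδ hfin hF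
  refine ⟨vB, hB, fun T hT => ?_⟩
  calc T * g T ≤ T * ((1 / 2) ^ κ T / 6) := by gcongr; exact hT₀ T hT
    _ ≤ mAliceRegret vA vB SA T := mul_le_mAliceRegret (hSA T) hB fun P hP =>
        hgap (κ T) P (mem_biUnion (mem_singleton _) hP)

/-- measurable-cut game, myopic Bob, lower bound: there exist `c > 0`,
`T₀ ∈ ℕ`, and density bounds `0 < δ' ≤ Δ'`, depending only on `δ` and `Δ`, such that for
every Alice value density and every deterministic Alice strategy there is a Bob value
density (with bounds `δ', Δ'`) against which Alice's Stackelberg regret over every horizon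
`T ≥ T₀` is at least `c·T/(log T)²`. -/
theorem measurable_cut_myopic_lower (δ Δ : ℝ) (hδ : 0 < δ) (hδΔ : δ ≤ Δ) :
    ∃ (c : ℝ) (T₀ : ℕ) (δ' Δ' : ℝ), 0 < c ∧ 0 < δ' ∧ δ' ≤ Δ' ∧
      ∀ vA : ℝ → ℝ, IsValueDensity δ Δ vA →
        ∀ SA : MAliceStrategy,
          (∀ T h, MeasurableSet (SA T h) ∧ SA T h ⊆ Set.Icc 0 1) →
          ∃ vB : ℝ → ℝ, IsValueDensity δ' Δ' vB ∧
            ∀ T : ℕ, T₀ ≤ T →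
              c * T / (Real.log T) ^ 2 ≤ mAliceRegret vA vB SA T := by
  have hg : Filter.Tendsto (fun T : ℕ => 1 / Real.log T ^ 2) Filter.atTop (nhds 0) := by
    have hlog := Real.tendsto_log_atTop.comp (tendsto_natCast_atTop_atTop (R := ℝ))
    exact ((Filter.tendsto_pow_atTop two_ne_zero).comp hlog).const_div_atTop 1
  obtain ⟨T₀, hT₀⟩ := measurable_cut_myopic_lower_general δ Δ hδ.le hg
  refine ⟨1, T₀, 3 / 4 * δ, 3 / 2 * Δ, one_pos, by positivity, by linarith, fun vA hA SA hSA => ?_⟩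
  obtain ⟨vB, hB, hreg⟩ := hT₀ vA hA SA fun T h => (hSA T h).1
  exact ⟨vB, hB, fun T hT => by simpa only [one_mul, mul_one_div] using hreg T hT⟩

end
end

section
/- For all constants 0 < δ ≤ Δ there exists C > 0 such that: for every Alice value density v_A there is a deterministic Alice strategy for the repeated 2-cut game with the property that for every Bob value density v_B and every horizon T ≥ 2, Alice's Stackelberg regret against the myopic Bob over horizon T is at most C·√(T·log T). -/
open MeasureTheory Set

noncomputable section

attribute [local instance] Classical.propDecidable

/-- Extended cut points: `0, c 0, …, c (k-1), 1`. -/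
def extCuts (k : ℕ) (c : Fin k → ℝ) : ℕ → ℝ := fun i =>
  if i = 0 then 0 else if h : i - 1 < k then c ⟨i - 1, h⟩ else 1

/-- A valid vector of `k` cut points: nondecreasing, within `[0,1]`. -/
def ValidCuts (k : ℕ) (c : Fin k → ℝ) : Prop :=
  Monotone c ∧ ∀ i, c i ∈ Set.Icc (0:ℝ) 1

/-- The two pieces of the alternating partition induced by cuts `c`:
`true` gives the union of even-indexed intervals, `false` the odd-indexed ones. -/
def altPiece (k : ℕ) (c : Fin k → ℝ) (b : Bool) : Set ℝ :=
  ⋃ i ∈ Finset.range (k + 1),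
    if decide (i % 2 = 0) = b then Set.Icc (extCuts k c i) (extCuts k c (i + 1)) else ∅

/-- Alice's Stackelberg value with `k` cuts: max of `V_A(Z_A)` over alternating partitions
`(Z_A, Z_B)` induced by `k` cut points with `V_B(Z_B) ≥ 1/2`. -/
def stackelbergValue (k : ℕ) (vA vB : ℝ → ℝ) : ℝ :=
  sSup { u : ℝ | ∃ (c : Fin k → ℝ) (b : Bool), ValidCuts k c ∧
    1 / 2 ≤ pieceVal vB (altPiece k c (!b)) ∧ u = pieceVal vA (altPiece k c b) }

/-- A history of play: the list of (Alice's cuts, Bob's choice) in past rounds. -/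
abbrev Hist (k : ℕ) := List ((Fin k → ℝ) × Bool)

/-- Alice's deterministic strategy: horizon and history ↦ next cut vector. -/
abbrev AliceStrategy (k : ℕ) := ℕ → Hist k → (Fin k → ℝ)

/-- Bob's deterministic strategy: horizon, history, and Alice's current cuts ↦ choice. -/
abbrev BobStrategy (k : ℕ) := ℕ → Hist k → (Fin k → ℝ) → Bool

/-- The history of play after `t` rounds. -/
def playHist (k : ℕ) (SA : AliceStrategy k) (SB : BobStrategy k) (T : ℕ) : ℕ → Hist k
  | 0 => []
  | t + 1 =>
      let h := playHist k SA SB T t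
      let cuts := SA T h
      h ++ [(cuts, SB T h cuts)]

/-- Alice's cuts in round `t` (0-indexed). -/
def roundCuts (k : ℕ) (SA : AliceStrategy k) (SB : BobStrategy k) (T t : ℕ) : Fin k → ℝ :=
  SA T (playHist k SA SB T t)

/-- Bob's choice in round `t` (0-indexed). -/
def roundChoice (k : ℕ) (SA : AliceStrategy k) (SB : BobStrategy k) (T t : ℕ) : Bool :=
  SB T (playHist k SA SB T t) (roundCuts k SA SB T t)

/-- Alice's Stackelberg regret over horizon `T`: in each round she receives the value of
the piece Bob did not choose. -/
def aliceRegret (k : ℕ) (vA vB : ℝ → ℝ) (SA : AliceStrategy k) (SB : BobStrategy k)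
    (T : ℕ) : ℝ :=
  ∑ t ∈ Finset.range T,
    (stackelbergValue k vA vB -
      pieceVal vA (altPiece k (roundCuts k SA SB T t) (!(roundChoice k SA SB T t))))

/-- Bob's regret over horizon `T` relative to always choosing his preferred piece. -/
def bobRegret (k : ℕ) (vB : ℝ → ℝ) (SA : AliceStrategy k) (SB : BobStrategy k) (T : ℕ) : ℝ :=
  ∑ t ∈ Finset.range T,
    (max (pieceVal vB (altPiece k (roundCuts k SA SB T t) true))
        (pieceVal vB (altPiece k (roundCuts k SA SB T t) false)) -
      pieceVal vB (altPiece k (roundCuts k SA SB T t) (roundChoice k SA SB T t)))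

/-- Bob's strategy guarantees regret at most `R T` against every Alice strategy and horizon. -/
def BobGuarantees (k : ℕ) (vB : ℝ → ℝ) (SB : BobStrategy k) (R : ℕ → ℝ) : Prop :=
  ∀ (SA : AliceStrategy k) (T : ℕ), bobRegret k vB SA SB T ≤ R T

/-- The myopic Bob: chooses the piece of larger `V_B`-value, breaking ties towards
the piece of smaller `V_A`-value. -/
def myopicBob (k : ℕ) (vA vB : ℝ → ℝ) : BobStrategy k := fun _ _ c =>
  if pieceVal vB (altPiece k c false) < pieceVal vB (altPiece k c true) then true
  else if pieceVal vB (altPiece k c true) < pieceVal vB (altPiece k c false) then false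
  else if pieceVal vA (altPiece k c true) ≤ pieceVal vA (altPiece k c false) then true
  else false

/-- Alice's strategy always produces valid cut vectors. -/
def AliceValid (k : ℕ) (SA : AliceStrategy k) : Prop := ∀ T h, ValidCuts k (SA T h)

/-!
Write `G` for Bob's cumulative value. The middle piece `[x, y]` is worth `G y - G x` to him, which
increases with `y` and decreases with `x`. Alice places her two cuts at points `i / n ≤ j / n` of a
grid, starting from `i = j = 0`; whenever Bob takes the outer piece she advances `j`, and whenever
he takes the middle piece she advances `i`. This staircase hugs the curve `G y - G x = 1 / 2`, so
its first `2 * n` steps come within `1 / n`, in each coordinate and on the side that is favourable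
to Alice, of every partition giving Bob half of his value: one of the explored cuts loses at most
`2 * Δ / n` against her Stackelberg value. Committing to the best explored cut therefore costs
`O(n + T / n)` in total, and `n ≈ √T` gives regret `O(√T)`, without even the logarithmic factor.
-/

/-! ### Cumulative values -/

/-- The cumulative distribution function `x ↦ ∫₀ˣ v` of a density on the cake. -/
def cumValue (v : ℝ → ℝ) (x : ℝ) : ℝ := ∫ t in (0 : ℝ)..x, v t

section CumValue

variable {v : ℝ → ℝ} {x y : ℝ}

@[simp]
theorem cumValue_zero (v : ℝ → ℝ) : cumValue v 0 = 0 := intervalIntegral.integral_same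

theorem intervalIntegrable_of_mem_Icc (hv : IntegrableOn v (Icc 0 1))
    (hx : x ∈ Icc (0 : ℝ) 1) (hy : y ∈ Icc (0 : ℝ) 1) : IntervalIntegrable v volume x y :=
  (hv.mono_set (uIcc_subset_Icc hx hy)).intervalIntegrable

theorem integral_eq_cumValue_sub (hv : IntegrableOn v (Icc 0 1))
    (hx : x ∈ Icc (0 : ℝ) 1) (hy : y ∈ Icc (0 : ℝ) 1) :
    ∫ t in x..y, v t = cumValue v y - cumValue v x := by
  have h0 : (0 : ℝ) ∈ Icc (0 : ℝ) 1 := unitInterval.zero_mem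
  exact (intervalIntegral.integral_interval_sub_left (intervalIntegrable_of_mem_Icc hv h0 hy)
    (intervalIntegrable_of_mem_Icc hv h0 hx)).symm

theorem setIntegral_Icc_eq_cumValue_sub (hv : IntegrableOn v (Icc 0 1))
    (hx : x ∈ Icc (0 : ℝ) 1) (hy : y ∈ Icc (0 : ℝ) 1) (hxy : x ≤ y) :
    ∫ t in Icc x y, v t = cumValue v y - cumValue v x := by
  rw [integral_Icc_eq_integral_Ioc, ← intervalIntegral.integral_of_le hxy,
    integral_eq_cumValue_sub hv hx hy]

theorem cumValue_one (v : ℝ → ℝ) : cumValue v 1 = ∫ t in Icc (0 : ℝ) 1, v t := by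
  rw [integral_Icc_eq_integral_Ioc, ← intervalIntegral.integral_of_le zero_le_one, cumValue]

theorem strictMonoOn_cumValue (hv : IntegrableOn v (Icc 0 1))
    (hpos : ∀ t ∈ Icc (0 : ℝ) 1, 0 < v t) : StrictMonoOn (cumValue v) (Icc 0 1) := by
  intro x hx y hy hxy
  rw [← sub_pos, ← integral_eq_cumValue_sub hv hx hy]
  exact intervalIntegral.intervalIntegral_pos_of_pos_on (intervalIntegrable_of_mem_Icc hv hx hy)
    (fun t ht => hpos t ⟨hx.1.trans ht.1.le, ht.2.le.trans hy.2⟩) hxy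

theorem monotoneOn_cumValue (hv : IntegrableOn v (Icc 0 1))
    (hnonneg : ∀ t ∈ Icc (0 : ℝ) 1, 0 ≤ v t) : MonotoneOn (cumValue v) (Icc 0 1) := by
  intro x hx y hy hxy
  rw [← sub_nonneg, ← integral_eq_cumValue_sub hv hx hy]
  exact intervalIntegral.integral_nonneg hxy
    fun t ht => hnonneg t ⟨hx.1.trans ht.1, ht.2.trans hy.2⟩

theorem cumValue_le_add_mul {Δ ε : ℝ} (hv : IntegrableOn v (Icc 0 1))
    (hbd : ∀ t ∈ Icc (0 : ℝ) 1, v t ∈ Icc 0 Δ) (hx : x ∈ Icc (0 : ℝ) 1) (hy : y ∈ Icc (0 : ℝ) 1)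
    (hε : 0 ≤ ε) (hxy : y ≤ x + ε) : cumValue v y ≤ cumValue v x + Δ * ε := by
  have hΔ : 0 ≤ Δ := (hbd x hx).1.trans (hbd x hx).2
  rcases le_total y x with hyx | hyx
  · exact (monotoneOn_cumValue hv (fun t ht => (hbd t ht).1) hy hx hyx).trans
      (le_add_of_nonneg_right (mul_nonneg hΔ hε))
  · have hle : ∫ t in x..y, v t ≤ ∫ _ in x..y, Δ :=
      intervalIntegral.integral_mono_on hyx (intervalIntegrable_of_mem_Icc hv hx hy)
        intervalIntegrable_const fun t ht => (hbd t ⟨hx.1.trans ht.1, ht.2.trans hy.2⟩).2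
    rw [integral_eq_cumValue_sub hv hx hy, intervalIntegral.integral_const, smul_eq_mul] at hle
    nlinarith

end CumValue

/-! ### Values of the pieces -/

section Pieces

variable {k : ℕ} {v : ℝ → ℝ}

theorem extCuts_mem_Icc {c : Fin k → ℝ} (hc : ValidCuts k c) (i : ℕ) :
    extCuts k c i ∈ Icc (0 : ℝ) 1 := by
  unfold extCuts
  split_ifs
  exacts [unitInterval.zero_mem, hc.2 _, unitInterval.one_mem]

theorem altPiece_subset_Icc {c : Fin k → ℝ} (hc : ValidCuts k c) (b : Bool) :
    altPiece k c b ⊆ Icc 0 1 := by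
  refine iUnion₂_subset fun i _ => ?_
  split_ifs
  exacts [Icc_subset_Icc (extCuts_mem_Icc hc i).1 (extCuts_mem_Icc hc (i + 1)).2, empty_subset _]

theorem measurableSet_altPiece (c : Fin k → ℝ) (b : Bool) : MeasurableSet (altPiece k c b) := by
  refine Finset.measurableSet_biUnion _ fun i _ => ?_
  split_ifs
  exacts [measurableSet_Icc, MeasurableSet.empty]

theorem pieceVal_altPiece_nonneg {c : Fin k → ℝ} (hnonneg : ∀ t ∈ Icc (0 : ℝ) 1, 0 ≤ v t)
    (hc : ValidCuts k c) (b : Bool) : 0 ≤ pieceVal v (altPiece k c b) :=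
  setIntegral_nonneg (measurableSet_altPiece c b) fun t ht =>
    hnonneg t (altPiece_subset_Icc hc b ht)

theorem pieceVal_altPiece_le {c : Fin k → ℝ} (hv : IntegrableOn v (Icc 0 1))
    (hnonneg : ∀ t ∈ Icc (0 : ℝ) 1, 0 ≤ v t) (hc : ValidCuts k c) (b : Bool) :
    pieceVal v (altPiece k c b) ≤ ∫ t in Icc (0 : ℝ) 1, v t :=
  setIntegral_mono_set hv ((ae_restrict_iff' measurableSet_Icc).2 (.of_forall hnonneg))
    (altPiece_subset_Icc hc b).eventuallyLE

theorem stackelbergValue_le_integral {vA : ℝ → ℝ} (vB : ℝ → ℝ) (hA : IntegrableOn vA (Icc 0 1))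
    (hnonneg : ∀ t ∈ Icc (0 : ℝ) 1, 0 ≤ vA t) :
    stackelbergValue k vA vB ≤ ∫ t in Icc (0 : ℝ) 1, vA t := by
  refine Real.sSup_le ?_ (setIntegral_nonneg measurableSet_Icc hnonneg)
  rintro _ ⟨c, b, hcut, -, rfl⟩
  exact pieceVal_altPiece_le hA hnonneg hcut b

theorem altPiece_two_true (c : Fin 2 → ℝ) : altPiece 2 c true = Icc 0 (c 0) ∪ Icc (c 1) 1 := by
  simp [altPiece, Finset.range_add_one, extCuts, union_comm]

theorem altPiece_two_false (c : Fin 2 → ℝ) : altPiece 2 c false = Icc (c 0) (c 1) := by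
  simp [altPiece, Finset.range_add_one, extCuts]

theorem validCuts_pair {x y : ℝ} (hx : x ∈ Icc (0 : ℝ) 1) (hy : y ∈ Icc (0 : ℝ) 1)
    (hxy : x ≤ y) : ValidCuts 2 ![x, y] :=
  ⟨by simpa [Fin.monotone_iff_le_succ] using hxy, by simpa [Fin.forall_fin_two] using ⟨hx, hy⟩⟩

variable {c : Fin 2 → ℝ}

theorem pieceVal_altPiece_two_false (hv : IntegrableOn v (Icc 0 1)) (hc : ValidCuts 2 c) :
    pieceVal v (altPiece 2 c false) = cumValue v (c 1) - cumValue v (c 0) := by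
  rw [altPiece_two_false, pieceVal,
    setIntegral_Icc_eq_cumValue_sub hv (hc.2 0) (hc.2 1) (hc.1 zero_le_one)]

theorem pieceVal_altPiece_two_true (hv : IntegrableOn v (Icc 0 1)) (hc : ValidCuts 2 c) :
    pieceVal v (altPiece 2 c true) =
      (∫ t in Icc (0 : ℝ) 1, v t) - (cumValue v (c 1) - cumValue v (c 0)) := by
  have h0 := hc.2 0
  have h1 := hc.2 1
  have hdisj : AEDisjoint volume (Icc 0 (c 0)) (Icc (c 1) 1) :=
    measure_mono_null (t := {c 0})
      (fun _ ht => le_antisymm ht.1.2 ((hc.1 zero_le_one).trans ht.2.1)) (by simp)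
  rw [altPiece_two_true, pieceVal, setIntegral_union₀ hdisj measurableSet_Icc.nullMeasurableSet
      (hv.mono_set (Icc_subset_Icc le_rfl h0.2)) (hv.mono_set (Icc_subset_Icc h1.1 le_rfl)),
    setIntegral_Icc_eq_cumValue_sub hv unitInterval.zero_mem h0 h0.1,
    setIntegral_Icc_eq_cumValue_sub hv h1 unitInterval.one_mem h1.2, cumValue_zero, cumValue_one]
  ring

end Pieces

/-! ### The staircase -/

/-- `r` compares the increments of `g` with the threshold `θ`: it answers `true` only if
`g j - g i ≤ θ` and `false` only if `θ ≤ g j - g i`. Either answer is allowed in case of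
equality. -/
structure IsThresholdOracle (g : ℕ → ℝ) (θ : ℝ) (r : ℕ → ℕ → Bool) : Prop where
  le_threshold : ∀ {i j}, r i j = true → g j - g i ≤ θ
  threshold_le : ∀ {i j}, r i j = false → θ ≤ g j - g i

/-- The lattice path from `(0, 0)` that leaves `(i, j)` towards `(i, j + 1)` if `r i j = true` and
towards `(i + 1, j)` otherwise. -/
def staircase (r : ℕ → ℕ → Bool) : ℕ → ℕ × ℕ
  | 0 => (0, 0)
  | t + 1 =>
      let p := staircase r t
      if r p.1 p.2 then (p.1, p.2 + 1) else (p.1 + 1, p.2)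

section Staircase

variable {g : ℕ → ℝ} {θ : ℝ} {r : ℕ → ℕ → Bool}

theorem staircase_succ_of_true {t i j : ℕ} (ht : staircase r t = (i, j)) (hr : r i j = true) :
    staircase r (t + 1) = (i, j + 1) := by
  simp [staircase, ht, hr]

theorem staircase_succ_of_false {t i j : ℕ} (ht : staircase r t = (i, j)) (hr : r i j = false) :
    staircase r (t + 1) = (i + 1, j) := by
  simp [staircase, ht, hr]

theorem staircase_fst_add_snd (r : ℕ → ℕ → Bool) (t : ℕ) :
    (staircase r t).1 + (staircase r t).2 = t := by
  induction t with
  | zero => rfl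
  | succ t ih =>
    rw [staircase]
    split_ifs <;> dsimp only <;> omega

theorem IsThresholdOracle.threshold_le_of_staircase_eq (h : IsThresholdOracle g θ r)
    (hg : Monotone g) {t i j : ℕ} (ht : staircase r t = (i + 1, j)) : θ ≤ g j - g i := by
  induction t generalizing i j with
  | zero => simp [staircase] at ht
  | succ t ih =>
    rcases hp : staircase r t with ⟨i', j'⟩
    cases hr : r i' j'
    · obtain ⟨rfl, rfl⟩ : i' = i ∧ j' = j := by
        simpa [staircase_succ_of_false hp hr] using ht
      exact h.threshold_le hr
    · obtain ⟨rfl, rfl⟩ : i' = i + 1 ∧ j' + 1 = j := by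
        simpa [staircase_succ_of_true hp hr] using ht
      linarith [ih hp, hg j'.le_succ]

theorem IsThresholdOracle.le_threshold_of_staircase_eq (h : IsThresholdOracle g θ r)
    (hg : Monotone g) {t i j : ℕ} (ht : staircase r t = (i, j + 1)) : g j - g i ≤ θ := by
  induction t generalizing i j with
  | zero => simp [staircase] at ht
  | succ t ih =>
    rcases hp : staircase r t with ⟨i', j'⟩
    cases hr : r i' j'
    · obtain ⟨rfl, rfl⟩ : i' + 1 = i ∧ j' = j + 1 := by
        simpa [staircase_succ_of_false hp hr] using ht
      linarith [ih hp, hg i'.le_succ]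
    · obtain ⟨rfl, rfl⟩ : i' = i ∧ j' = j := by
        simpa [staircase_succ_of_true hp hr] using ht
      exact h.le_threshold hr

theorem exists_staircase_of_lt_snd {b L : ℕ} (hL : b < (staircase r L).2) :
    ∃ t < L, ∃ i, staircase r t = (i, b) ∧ r i b = true := by
  induction L with
  | zero => simp [staircase] at hL
  | succ L ih =>
    rcases hp : staircase r L with ⟨i, j⟩
    rcases lt_or_ge b j with hbj | hjb
    · obtain ⟨t, ht, h⟩ := ih (by rwa [hp])
      exact ⟨t, by omega, h⟩
    · cases hr : r i j
      · rw [staircase_succ_of_false hp hr] at hL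
        exact absurd hL hjb.not_gt
      · rw [staircase_succ_of_true hp hr] at hL
        obtain rfl : j = b := le_antisymm hjb (Nat.lt_succ_iff.1 hL)
        exact ⟨L, L.lt_succ_self, i, hp, hr⟩

theorem exists_staircase_of_lt_fst {a L : ℕ} (hL : a < (staircase r L).1) :
    ∃ t < L, ∃ j, staircase r t = (a, j) ∧ r a j = false := by
  induction L with
  | zero => simp [staircase] at hL
  | succ L ih =>
    rcases hp : staircase r L with ⟨i, j⟩
    rcases lt_or_ge a i with hai | hia
    · obtain ⟨t, ht, h⟩ := ih (by rwa [hp])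
      exact ⟨t, by omega, h⟩
    · cases hr : r i j
      · rw [staircase_succ_of_false hp hr] at hL
        obtain rfl : i = a := le_antisymm hia (Nat.lt_succ_iff.1 hL)
        exact ⟨L, L.lt_succ_self, j, hp, hr⟩
      · rw [staircase_succ_of_true hp hr] at hL
        exact absurd hL hia.not_gt

variable {n : ℕ}

theorem IsThresholdOracle.lt_staircase_snd (h : IsThresholdOracle g θ r) (hg : Monotone g)
    (hθ : 0 < θ) (hle : ∀ j, g j ≤ g n) {b : ℕ} (hb : b < n) : b < (staircase r (2 * n)).2 := by
  by_contra! hcon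
  have hsum := staircase_fst_add_snd r (2 * n)
  obtain ⟨i, hi⟩ : ∃ i, (staircase r (2 * n)).1 = i + 1 :=
    Nat.exists_eq_succ_of_ne_zero (by omega)
  have hni : n ≤ i := by omega
  linarith [h.threshold_le_of_staircase_eq hg (Prod.ext hi rfl), hg hni,
    hle (staircase r (2 * n)).2]

theorem IsThresholdOracle.lt_staircase_fst (h : IsThresholdOracle g θ r) (hg : Monotone g)
    {a : ℕ} (ha : a < n) (hga : θ < g n - g a) : a < (staircase r (2 * n)).1 := by
  by_contra! hcon
  have hsum := staircase_fst_add_snd r (2 * n)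
  obtain ⟨j, hj⟩ : ∃ j, (staircase r (2 * n)).2 = j + 1 :=
    Nat.exists_eq_succ_of_ne_zero (by omega)
  have hnj : n ≤ j := by omega
  linarith [h.le_threshold_of_staircase_eq hg (Prod.ext rfl hj), hg hnj, hg hcon]

end Staircase

/-! ### The grid -/

/-- The `i`-th point `i / n` of the uniform grid on the cake, capped at `1` so that every index
yields a point of the cake. -/
def gridPoint (n i : ℕ) : ℝ := min ((i : ℝ) / n) 1

/-- The cuts at the grid points `i` and `j`; `i` is capped at `j` so that the cuts are always in
order. -/
def gridCuts (n i j : ℕ) : Fin 2 → ℝ := ![gridPoint n (min i j), gridPoint n j]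

@[simp]
theorem gridCuts_zero (n i j : ℕ) : gridCuts n i j 0 = gridPoint n (min i j) := rfl

@[simp]
theorem gridCuts_one (n i j : ℕ) : gridCuts n i j 1 = gridPoint n j := rfl

section Grid

variable {n : ℕ}

theorem gridPoint_mem_Icc (n i : ℕ) : gridPoint n i ∈ Icc (0 : ℝ) 1 :=
  ⟨le_min (by positivity) zero_le_one, min_le_right _ _⟩

theorem monotone_gridPoint (n : ℕ) : Monotone (gridPoint n) := by
  intro i j hij
  unfold gridPoint
  gcongr

@[simp]
theorem gridPoint_zero (n : ℕ) : gridPoint n 0 = 0 := by simp [gridPoint]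

theorem gridPoint_self (hn : 0 < n) : gridPoint n n = 1 := by
  simp [gridPoint, div_self (Nat.cast_ne_zero (R := ℝ).2 hn.ne')]

theorem gridPoint_succ_le (n i : ℕ) : gridPoint n (i + 1) ≤ gridPoint n i + 1 / n := by
  rw [gridPoint, gridPoint, ← min_add_add_right, Nat.cast_succ, add_div]
  exact min_le_min_left _ (le_add_of_nonneg_right (by positivity))

theorem exists_gridPoint_le_le_succ (hn : 0 < n) {x : ℝ} (hx : x ∈ Icc (0 : ℝ) 1) :
    ∃ a < n, gridPoint n a ≤ x ∧ x ≤ gridPoint n (a + 1) ∧ (a = 0 ∨ gridPoint n a < x) := by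
  have hlast : x ≤ gridPoint n (n - 1 + 1) := by
    rw [Nat.sub_add_cancel hn, gridPoint_self hn]
    exact hx.2
  have hex : ∃ a, x ≤ gridPoint n (a + 1) := ⟨n - 1, hlast⟩
  have hlt : Nat.find hex < n := (Nat.find_min' hex hlast).trans_lt (Nat.pred_lt hn.ne')
  refine ⟨Nat.find hex, hlt, ?_⟩
  rcases ha : Nat.find hex with _ | a
  · exact ⟨by simpa using hx.1, ha ▸ Nat.find_spec hex, .inl rfl⟩
  · have : gridPoint n (a + 1) < x := not_le.1 (Nat.find_min hex (ha ▸ a.lt_succ_self))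
    exact ⟨this.le, ha ▸ Nat.find_spec hex, .inr this⟩

theorem validCuts_gridCuts (n i j : ℕ) : ValidCuts 2 (gridCuts n i j) :=
  validCuts_pair (gridPoint_mem_Icc _ _) (gridPoint_mem_Icc _ _)
    (monotone_gridPoint n (min_le_right i j))

variable {G : ℝ → ℝ} {r : ℕ → ℕ → Bool} {θ x y : ℝ}

theorem monotone_comp_gridPoint (hG : MonotoneOn G (Icc 0 1)) (n : ℕ) :
    Monotone fun i => G (gridPoint n i) := fun _ _ hij =>
  hG (gridPoint_mem_Icc _ _) (gridPoint_mem_Icc _ _) (monotone_gridPoint n hij)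

theorem IsThresholdOracle.exists_staircase_near_of_le_threshold (hn : 0 < n)
    (hG : StrictMonoOn G (Icc 0 1)) (h : IsThresholdOracle (fun i => G (gridPoint n i)) θ r)
    (hθ : 0 < θ) (hx : x ∈ Icc (0 : ℝ) 1) (hy : y ∈ Icc (0 : ℝ) 1) (hxy : G y - G x ≤ θ) :
    ∃ t < 2 * n, ∃ i j, staircase r t = (i, j) ∧ r i j = true ∧
      gridPoint n i ≤ x + 1 / n ∧ y ≤ gridPoint n j + 1 / n := by
  have hg := monotone_comp_gridPoint hG.monotoneOn n
  obtain ⟨j, hjn, hjy, hyj, -⟩ := exists_gridPoint_le_le_succ hn hy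
  have hmax (i : ℕ) : G (gridPoint n i) ≤ G (gridPoint n n) := by
    rw [gridPoint_self hn]
    exact hG.monotoneOn (gridPoint_mem_Icc n i) unitInterval.one_mem (gridPoint_mem_Icc n i).2
  obtain ⟨t, ht, i, hp, hr⟩ := exists_staircase_of_lt_snd (h.lt_staircase_snd hg hθ hmax hjn)
  refine ⟨t, ht, i, j, hp, hr, ?_, hyj.trans (gridPoint_succ_le n j)⟩
  rcases i with _ | i
  · rw [gridPoint_zero]
    exact add_nonneg hx.1 (by positivity)
  · have hGy : G (gridPoint n j) ≤ G y := hG.monotoneOn (gridPoint_mem_Icc n j) hy hjy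
    have hGi : G (gridPoint n i) ≤ G x := by linarith [h.threshold_le_of_staircase_eq hg hp]
    have hix : gridPoint n i ≤ x := (hG.le_iff_le (gridPoint_mem_Icc n i) hx).1 hGi
    linarith [gridPoint_succ_le n i]

theorem IsThresholdOracle.exists_staircase_near_of_threshold_le (hn : 0 < n)
    (hG : StrictMonoOn G (Icc 0 1)) (h : IsThresholdOracle (fun i => G (gridPoint n i)) θ r)
    (hθ : θ < G 1 - G 0) (hx : x ∈ Icc (0 : ℝ) 1) (hy : y ∈ Icc (0 : ℝ) 1) (hxy : θ ≤ G y - G x) :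
    ∃ t < 2 * n, ∃ i j, staircase r t = (i, j) ∧ r i j = false ∧
      x ≤ gridPoint n i + 1 / n ∧ gridPoint n j ≤ y + 1 / n := by
  have hg := monotone_comp_gridPoint hG.monotoneOn n
  obtain ⟨i, hin, hix, hxi, hi⟩ := exists_gridPoint_le_le_succ hn hx
  have hGi : θ < G (gridPoint n n) - G (gridPoint n i) := by
    rw [gridPoint_self hn]
    rcases hi with rfl | hi
    · rwa [gridPoint_zero]
    · linarith [hG (gridPoint_mem_Icc n i) hx hi, hG.monotoneOn hy unitInterval.one_mem hy.2]
  obtain ⟨t, ht, j, hp, hr⟩ := exists_staircase_of_lt_fst (h.lt_staircase_fst hg hin hGi)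
  refine ⟨t, ht, i, j, hp, hr, hxi.trans (gridPoint_succ_le n i), ?_⟩
  rcases j with _ | j
  · rw [gridPoint_zero]
    exact add_nonneg hy.1 (by positivity)
  · have hGx : G (gridPoint n i) ≤ G x := hG.monotoneOn (gridPoint_mem_Icc n i) hx hix
    have hGj : G (gridPoint n j) ≤ G y := by linarith [h.le_threshold_of_staircase_eq hg hp]
    have hjy : gridPoint n j ≤ y := (hG.le_iff_le (gridPoint_mem_Icc n j) hy).1 hGj
    linarith [gridPoint_succ_le n j]

end Grid

/-! ### Exploring against a myopic Bob -/

/-- A choice rule, depending on the current cuts only, under which Bob takes a piece of maximal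
value to him, with arbitrary tie-breaking. -/
def IsMyopicRule (k : ℕ) (vB : ℝ → ℝ) (choice : (Fin k → ℝ) → Bool) : Prop :=
  ∀ c, pieceVal vB (altPiece k c (!choice c)) ≤ pieceVal vB (altPiece k c (choice c))

/-- Alice's utility in a round in which she cuts at `e.1` and Bob takes the piece `e.2`. -/
def payoff (k : ℕ) (vA : ℝ → ℝ) (e : (Fin k → ℝ) × Bool) : ℝ :=
  pieceVal vA (altPiece k e.1 (!e.2))

/-- The cuts along the staircase on the grid of size `n` that is driven by Bob's choices. -/
def sweepCuts (choice : (Fin 2 → ℝ) → Bool) (n t : ℕ) : Fin 2 → ℝ :=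
  let p := staircase (fun i j => choice (gridCuts n i j)) t
  gridCuts n p.1 p.2

section Explore

variable {vA vB : ℝ → ℝ} {choice : (Fin 2 → ℝ) → Bool} {n : ℕ} {Δ : ℝ}

theorem isMyopicRule_myopicBob (k : ℕ) (vA vB : ℝ → ℝ) (T : ℕ) (h : Hist k) :
    IsMyopicRule k vB (myopicBob k vA vB T h) := by
  intro c
  unfold myopicBob
  split_ifs <;> simp only [Bool.not_true, Bool.not_false] <;> linarith

theorem IsMyopicRule.cumValue_sub_le_half (hc : IsMyopicRule 2 vB choice)
    (hB : ∫ t in Icc (0 : ℝ) 1, vB t = 1) {c : Fin 2 → ℝ} (hcut : ValidCuts 2 c)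
    (h : choice c = true) : cumValue vB (c 1) - cumValue vB (c 0) ≤ 1 / 2 := by
  have hint : IntegrableOn vB (Icc 0 1) := integrable_of_integral_eq_one hB
  have hle := hc c
  rw [h, Bool.not_true, pieceVal_altPiece_two_false hint hcut,
    pieceVal_altPiece_two_true hint hcut, hB] at hle
  linarith

theorem IsMyopicRule.half_le_cumValue_sub (hc : IsMyopicRule 2 vB choice)
    (hB : ∫ t in Icc (0 : ℝ) 1, vB t = 1) {c : Fin 2 → ℝ} (hcut : ValidCuts 2 c)
    (h : choice c = false) : 1 / 2 ≤ cumValue vB (c 1) - cumValue vB (c 0) := by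
  have hint : IntegrableOn vB (Icc 0 1) := integrable_of_integral_eq_one hB
  have hle := hc c
  rw [h, Bool.not_false, pieceVal_altPiece_two_false hint hcut,
    pieceVal_altPiece_two_true hint hcut, hB] at hle
  linarith

theorem IsMyopicRule.isThresholdOracle (hc : IsMyopicRule 2 vB choice)
    (hnonneg : ∀ t ∈ Icc (0 : ℝ) 1, 0 ≤ vB t) (hB : ∫ t in Icc (0 : ℝ) 1, vB t = 1) (n : ℕ) :
    IsThresholdOracle (fun i => cumValue vB (gridPoint n i)) (1 / 2)
      fun i j => choice (gridCuts n i j) where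
  le_threshold {i j} h := by
    have hmono := monotone_comp_gridPoint
      (monotoneOn_cumValue (integrable_of_integral_eq_one hB) hnonneg) n (min_le_left i j)
    have hle : cumValue vB (gridPoint n j) - cumValue vB (gridPoint n (min i j)) ≤ 1 / 2 :=
      hc.cumValue_sub_le_half hB (validCuts_gridCuts n i j) h
    exact (sub_le_sub_left hmono _).trans hle
  threshold_le {i j} h := by
    have hle : 1 / 2 ≤ cumValue vB (gridPoint n j) - cumValue vB (gridPoint n (min i j)) :=
      hc.half_le_cumValue_sub hB (validCuts_gridCuts n i j) h
    rcases le_total i j with hij | hji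
    · rwa [min_eq_left hij] at hle
    · rw [min_eq_right hji] at hle
      linarith

theorem exists_le_payoff_sweepCuts_false (hn : 0 < n) (hA : IsValueDensity 0 Δ vA)
    (hpos : ∀ t ∈ Icc (0 : ℝ) 1, 0 < vB t) (hB : ∫ t in Icc (0 : ℝ) 1, vB t = 1)
    (hc : IsMyopicRule 2 vB choice) {c : Fin 2 → ℝ} (hcut : ValidCuts 2 c)
    (hhalf : 1 / 2 ≤ pieceVal vB (altPiece 2 c true)) :
    ∃ t < 2 * n, pieceVal vA (altPiece 2 c false) ≤
      payoff 2 vA (sweepCuts choice n t, choice (sweepCuts choice n t)) + 2 * Δ / n := by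
  have hAint : IntegrableOn vA (Icc 0 1) := integrable_of_integral_eq_one hA.2.2
  have hBint : IntegrableOn vB (Icc 0 1) := integrable_of_integral_eq_one hB
  rw [pieceVal_altPiece_two_true hBint hcut, hB] at hhalf
  have horacle := hc.isThresholdOracle (fun t ht => (hpos t ht).le) hB n
  obtain ⟨t, ht, i, j, hp, hr, hi, hj⟩ := horacle.exists_staircase_near_of_le_threshold hn
    (strictMonoOn_cumValue hBint hpos) one_half_pos (hcut.2 0) (hcut.2 1) (by linarith)
  refine ⟨t, ht, ?_⟩
  have hsweep : sweepCuts choice n t = gridCuts n i j := by rw [sweepCuts, hp]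
  have hε : (0 : ℝ) ≤ 1 / n := by positivity
  have hleft : cumValue vA (gridPoint n (min i j)) ≤ cumValue vA (c 0) + Δ * (1 / n) :=
    cumValue_le_add_mul hAint hA.2.1 (hcut.2 0) (gridPoint_mem_Icc _ _) hε
      ((monotone_gridPoint n (min_le_left i j)).trans hi)
  have hright : cumValue vA (c 1) ≤ cumValue vA (gridPoint n j) + Δ * (1 / n) :=
    cumValue_le_add_mul hAint hA.2.1 (gridPoint_mem_Icc _ _) (hcut.2 1) hε hj
  have hloss : 2 * Δ / n = 2 * (Δ * (1 / n)) := by ring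
  simp only [hsweep, hr, payoff, Bool.not_true, pieceVal_altPiece_two_false hAint hcut,
    pieceVal_altPiece_two_false hAint (validCuts_gridCuts n i j), gridCuts_zero, gridCuts_one]
  linarith

theorem exists_le_payoff_sweepCuts_true (hn : 0 < n) (hA : IsValueDensity 0 Δ vA)
    (hpos : ∀ t ∈ Icc (0 : ℝ) 1, 0 < vB t) (hB : ∫ t in Icc (0 : ℝ) 1, vB t = 1)
    (hc : IsMyopicRule 2 vB choice) {c : Fin 2 → ℝ} (hcut : ValidCuts 2 c)
    (hhalf : 1 / 2 ≤ pieceVal vB (altPiece 2 c false)) :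
    ∃ t < 2 * n, pieceVal vA (altPiece 2 c true) ≤
      payoff 2 vA (sweepCuts choice n t, choice (sweepCuts choice n t)) + 2 * Δ / n := by
  have hAint : IntegrableOn vA (Icc 0 1) := integrable_of_integral_eq_one hA.2.2
  have hBint : IntegrableOn vB (Icc 0 1) := integrable_of_integral_eq_one hB
  have horacle := hc.isThresholdOracle (fun t ht => (hpos t ht).le) hB n
  have hmono := strictMonoOn_cumValue hBint hpos
  rw [pieceVal_altPiece_two_false hBint hcut] at hhalf
  obtain ⟨t, ht, i, j, hp, hr, hi, hj⟩ := horacle.exists_staircase_near_of_threshold_le hn hmono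
    (by rw [cumValue_one, cumValue_zero, hB]; norm_num) (hcut.2 0) (hcut.2 1) hhalf
  refine ⟨t, ht, ?_⟩
  have hij : i ≤ j := by
    by_contra! hji
    linarith [horacle.threshold_le hr, monotone_comp_gridPoint hmono.monotoneOn n hji.le]
  have hsweep : sweepCuts choice n t = gridCuts n i j := by rw [sweepCuts, hp]
  have hε : (0 : ℝ) ≤ 1 / n := by positivity
  have hleft : cumValue vA (c 0) ≤ cumValue vA (gridPoint n (min i j)) + Δ * (1 / n) :=
    cumValue_le_add_mul hAint hA.2.1 (gridPoint_mem_Icc _ _) (hcut.2 0) hε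
      (by rwa [min_eq_left hij])
  have hright : cumValue vA (gridPoint n j) ≤ cumValue vA (c 1) + Δ * (1 / n) :=
    cumValue_le_add_mul hAint hA.2.1 (hcut.2 1) (gridPoint_mem_Icc _ _) hε hj
  have hloss : 2 * Δ / n = 2 * (Δ * (1 / n)) := by ring
  simp only [hsweep, hr, payoff, Bool.not_false, pieceVal_altPiece_two_true hAint hcut,
    pieceVal_altPiece_two_true hAint (validCuts_gridCuts n i j), gridCuts_zero, gridCuts_one]
  linarith

end Explore

/-! ### Play and commitment -/

section Play

variable {k : ℕ}

theorem length_playHist (SA : AliceStrategy k) (SB : BobStrategy k) (T t : ℕ) :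
    (playHist k SA SB T t).length = t := by
  induction t with
  | zero => rfl
  | succ t ih => simp [playHist, ih]

theorem mem_playHist {SA : AliceStrategy k} {SB : BobStrategy k} {T t : ℕ}
    {e : (Fin k → ℝ) × Bool} :
    e ∈ playHist k SA SB T t ↔ ∃ s < t, e = (roundCuts k SA SB T s, roundChoice k SA SB T s) := by
  induction t with
  | zero => simp [playHist]
  | succ t ih =>
    simp only [playHist, List.mem_append, ih, List.mem_singleton, Nat.lt_succ_iff_lt_or_eq,
      or_and_right, exists_or, exists_eq_left]
    rfl

/-- The cuts of an entry of `h` with the highest payoff to Alice. Only valid entries are considered,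
and `0, …, 0` is returned if there are none, so that the result is valid for every history. -/
def bestCuts (vA : ℝ → ℝ) (h : Hist k) : Fin k → ℝ :=
  ((h.filter fun e => ValidCuts k e.1).argmax (payoff k vA)).elim 0 Prod.fst

theorem validCuts_bestCuts (vA : ℝ → ℝ) (h : Hist k) : ValidCuts k (bestCuts vA h) := by
  unfold bestCuts
  rcases hm : (h.filter fun e => ValidCuts k e.1).argmax (payoff k vA) with _ | e
  · rw [hm]
    exact ⟨monotone_const, fun _ => unitInterval.zero_mem⟩
  · rw [hm]
    simpa using (List.mem_filter.1 (List.argmax_mem hm)).2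

theorem payoff_le_payoff_bestCuts {vA : ℝ → ℝ} {choice : (Fin k → ℝ) → Bool} {h : Hist k}
    (hvalid : ∀ e ∈ h, ValidCuts k e.1) (hchoice : ∀ e ∈ h, e.2 = choice e.1)
    {e : (Fin k → ℝ) × Bool} (he : e ∈ h) :
    payoff k vA e ≤ payoff k vA (bestCuts vA h, choice (bestCuts vA h)) := by
  have he' : e ∈ h.filter fun e => ValidCuts k e.1 := List.mem_filter.2 ⟨he, by simp [hvalid e he]⟩
  rcases hm : (h.filter fun e => ValidCuts k e.1).argmax (payoff k vA) with _ | m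
  · simp [List.argmax_eq_none.1 hm] at he'
  · have hbest : (bestCuts vA h, choice (bestCuts vA h)) = m := by
      rw [bestCuts, hm, Option.elim_some,
        ← hchoice m (List.mem_filter.1 (List.argmax_mem hm)).1]
    rw [hbest]
    exact List.le_of_mem_argmax he' hm

end Play

/-- Explore along the staircase on the grid of size `n T` for `2 * n T` rounds, then repeat the best
cuts seen so far. The staircase position is read off the history as the numbers of times Bob took
the middle piece (`false`) and the outer piece (`true`). -/
def sweepThenCommit (vA : ℝ → ℝ) (n : ℕ → ℕ) : AliceStrategy 2 := fun T h =>
  if h.length < 2 * n T then gridCuts (n T) (h.countP fun e => !e.2) (h.countP fun e => e.2)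
  else bestCuts vA h

section SweepThenCommit

variable {vA vB : ℝ → ℝ} {n : ℕ → ℕ} {choice : (Fin 2 → ℝ) → Bool} {Δ : ℝ} {T t : ℕ}

theorem aliceValid_sweepThenCommit (vA : ℝ → ℝ) (n : ℕ → ℕ) :
    AliceValid 2 (sweepThenCommit vA n) := by
  intro T h
  unfold sweepThenCommit
  split_ifs
  exacts [validCuts_gridCuts _ _ _, validCuts_bestCuts _ _]

theorem roundCuts_sweepThenCommit_eq_gridCuts {SB : BobStrategy 2} (ht : t < 2 * n T) :
    let h := playHist 2 (sweepThenCommit vA n) SB T t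
    roundCuts 2 (sweepThenCommit vA n) SB T t =
      gridCuts (n T) (h.countP fun e => !e.2) (h.countP fun e => e.2) :=
  if_pos (by rwa [length_playHist])

theorem staircase_eq_countP_playHist (ht : t ≤ 2 * n T) :
    let h := playHist 2 (sweepThenCommit vA n) (fun _ _ => choice) T t
    staircase (fun i j => choice (gridCuts (n T) i j)) t =
      (h.countP fun e => !e.2, h.countP fun e => e.2) := by
  induction t with
  | zero => rfl
  | succ t ih =>
    have hcuts := roundCuts_sweepThenCommit_eq_gridCuts (vA := vA)
      (SB := fun _ _ => choice) (Nat.lt_of_succ_le ht)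
    rw [roundCuts] at hcuts
    simp only [staircase, ih (Nat.le_of_succ_le ht), playHist, hcuts, List.countP_append,
      List.countP_singleton]
    split_ifs <;> simp_all

theorem roundCuts_sweepThenCommit_eq_sweepCuts (ht : t < 2 * n T) :
    roundCuts 2 (sweepThenCommit vA n) (fun _ _ => choice) T t = sweepCuts choice (n T) t := by
  rw [roundCuts_sweepThenCommit_eq_gridCuts ht, sweepCuts, staircase_eq_countP_playHist ht.le]

theorem payoff_sweepCuts_le_payoff_roundCuts {s : ℕ} (hs : s < 2 * n T) (ht : 2 * n T ≤ t) :
    let c := roundCuts 2 (sweepThenCommit vA n) (fun _ _ => choice) T t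
    payoff 2 vA (sweepCuts choice (n T) s, choice (sweepCuts choice (n T) s)) ≤
      payoff 2 vA (c, choice c) := by
  intro c
  have hc : c = bestCuts vA (playHist 2 (sweepThenCommit vA n) (fun _ _ => choice) T t) :=
    if_neg (by rw [length_playHist]; exact ht.not_gt)
  rw [hc, ← roundCuts_sweepThenCommit_eq_sweepCuts (vA := vA) hs]
  apply payoff_le_payoff_bestCuts
  · rintro _ he
    obtain ⟨s, -, rfl⟩ := mem_playHist.1 he
    exact aliceValid_sweepThenCommit vA n _ _
  · rintro _ he
    obtain ⟨s, -, rfl⟩ := mem_playHist.1 he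
    rfl
  · exact mem_playHist.2 ⟨s, hs.trans_le ht, rfl⟩

theorem stackelbergValue_le_payoff_roundCuts (hn : 0 < n T) (hA : IsValueDensity 0 Δ vA)
    (hpos : ∀ t ∈ Icc (0 : ℝ) 1, 0 < vB t) (hB : ∫ t in Icc (0 : ℝ) 1, vB t = 1)
    (hc : IsMyopicRule 2 vB choice) (ht : 2 * n T ≤ t) :
    let c := roundCuts 2 (sweepThenCommit vA n) (fun _ _ => choice) T t
    stackelbergValue 2 vA vB ≤ payoff 2 vA (c, choice c) + 2 * Δ / n T := by
  refine Real.sSup_le ?_ ?_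
  · rintro _ ⟨c, b, hcut, hhalf, rfl⟩
    obtain ⟨s, hs, hle⟩ : ∃ s < 2 * n T, pieceVal vA (altPiece 2 c b) ≤
        payoff 2 vA (sweepCuts choice (n T) s, choice (sweepCuts choice (n T) s)) +
          2 * Δ / n T := by
      cases b
      · exact exists_le_payoff_sweepCuts_false hn hA hpos hB hc hcut hhalf
      · exact exists_le_payoff_sweepCuts_true hn hA hpos hB hc hcut hhalf
    exact hle.trans (add_le_add_left (payoff_sweepCuts_le_payoff_roundCuts hs ht) _)
  · have hΔ : 0 ≤ Δ := nonempty_Icc.1 ⟨_, hA.2.1 0 unitInterval.zero_mem⟩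
    exact add_nonneg (pieceVal_altPiece_nonneg (fun t ht => (hA.2.1 t ht).1)
      (aliceValid_sweepThenCommit vA n _ _) _) (by positivity)

end SweepThenCommit

/-! ### The regret bound -/

theorem sum_range_le_add_mul {f : ℕ → ℝ} {L : ℕ} {ε : ℝ} (hε : 0 ≤ ε) (hone : ∀ t, f t ≤ 1)
    (htail : ∀ t, L ≤ t → f t ≤ ε) (T : ℕ) : ∑ t ∈ Finset.range T, f t ≤ L + T * ε := by
  have hsum : ∑ t ∈ Finset.range T, f t ≤ (min L T : ℕ) + T * ε := by
    induction T with
    | zero => simp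
    | succ T ih =>
      rw [Finset.sum_range_succ, Nat.cast_succ, add_one_mul]
      rcases lt_or_ge T L with hT | hT
      · rw [min_eq_right hT.le] at ih
        rw [min_eq_right hT, Nat.cast_succ]
        linarith [hone T]
      · rw [min_eq_left hT] at ih
        rw [min_eq_left (hT.trans T.le_succ)]
        linarith [htail T hT]
  exact hsum.trans (by gcongr; exact min_le_left _ _)

theorem aliceRegret_sweepThenCommit_le {vA vB : ℝ → ℝ} {Δ : ℝ} {n : ℕ → ℕ} {T : ℕ}
    {choice : (Fin 2 → ℝ) → Bool} (hn : 0 < n T) (hA : IsValueDensity 0 Δ vA)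
    (hpos : ∀ t ∈ Icc (0 : ℝ) 1, 0 < vB t) (hB : ∫ t in Icc (0 : ℝ) 1, vB t = 1)
    (hc : IsMyopicRule 2 vB choice) :
    aliceRegret 2 vA vB (sweepThenCommit vA n) (fun _ _ => choice) T ≤
      2 * n T + T * (2 * Δ / n T) := by
  have hΔ : 0 ≤ Δ := nonempty_Icc.1 ⟨_, hA.2.1 0 unitInterval.zero_mem⟩
  have hnonneg (t : ℝ) (ht : t ∈ Icc (0 : ℝ) 1) : 0 ≤ vA t := (hA.2.1 t ht).1
  let regret (t : ℕ) : ℝ :=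
    let c := roundCuts 2 (sweepThenCommit vA n) (fun _ _ => choice) T t
    stackelbergValue 2 vA vB - payoff 2 vA (c, choice c)
  have hone (t : ℕ) : regret t ≤ 1 :=
    (sub_le_self _ (pieceVal_altPiece_nonneg hnonneg (aliceValid_sweepThenCommit vA n _ _) _)).trans
      ((stackelbergValue_le_integral vB (integrable_of_integral_eq_one hA.2.2) hnonneg).trans_eq
        hA.2.2)
  have htail (t : ℕ) (ht : 2 * n T ≤ t) : regret t ≤ 2 * Δ / n T :=
    sub_le_iff_le_add'.2 (stackelbergValue_le_payoff_roundCuts hn hA hpos hB hc ht)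
  exact_mod_cast sum_range_le_add_mul (by positivity) hone htail T

theorem two_mul_sqrt_succ_add_mul_div_le {T : ℕ} (hT : 0 < T) {Δ : ℝ} (hΔ : 0 ≤ Δ) :
    2 * ((Nat.sqrt T + 1 : ℕ) : ℝ) + T * (2 * Δ / (Nat.sqrt T + 1 : ℕ)) ≤ (4 + 2 * Δ) * √T := by
  have hone : 1 ≤ √(T : ℝ) := Real.one_le_sqrt.2 (by exact_mod_cast hT)
  have hfloor : (Nat.sqrt T : ℝ) ≤ √T := Real.nat_sqrt_le_real_sqrt
  have hceil : √T ≤ (Nat.sqrt T + 1 : ℕ) := by exact_mod_cast Real.real_sqrt_le_nat_sqrt_succ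
  have hcommit : T * (2 * Δ / (Nat.sqrt T + 1 : ℕ)) ≤ 2 * Δ * √T :=
    calc T * (2 * Δ / (Nat.sqrt T + 1 : ℕ)) ≤ T * (2 * Δ / √T) := by gcongr
      _ = 2 * Δ * (T / √T) := by ring
      _ = 2 * Δ * √T := by rw [Real.div_sqrt]
  push_cast at hcommit ⊢
  linarith

theorem sqrt_le_two_mul_sqrt_mul_log {x : ℝ} (hx : 2 ≤ x) : √x ≤ 2 * √(x * Real.log x) := by
  have hlog : 1 / 2 ≤ Real.log x := by
    linarith [Real.log_two_gt_d9, Real.log_le_log two_pos hx]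
  rw [Real.sqrt_le_left (by positivity), mul_pow, Real.sq_sqrt (by positivity)]
  nlinarith

theorem two_cut_myopic_upper_general {Δ : ℝ} {vA : ℝ → ℝ} (hA : IsValueDensity 0 Δ vA) :
    ∃ SA : AliceStrategy 2, AliceValid 2 SA ∧
      ∀ vB : ℝ → ℝ, (∀ x ∈ Icc (0 : ℝ) 1, 0 < vB x) → ∫ x in Icc (0 : ℝ) 1, vB x = 1 →
        ∀ choice : (Fin 2 → ℝ) → Bool, IsMyopicRule 2 vB choice →
          ∀ T : ℕ, aliceRegret 2 vA vB SA (fun _ _ => choice) T ≤ (4 + 2 * Δ) * √T := by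
  refine ⟨sweepThenCommit vA fun T => Nat.sqrt T + 1, aliceValid_sweepThenCommit _ _,
    fun vB hpos hB choice hc T => ?_⟩
  rcases T.eq_zero_or_pos with rfl | hT
  · simp [aliceRegret]
  · have hΔ : 0 ≤ Δ := nonempty_Icc.1 ⟨_, hA.2.1 0 unitInterval.zero_mem⟩
    calc aliceRegret 2 vA vB (sweepThenCommit vA fun T => Nat.sqrt T + 1) (fun _ _ => choice) T
        ≤ 2 * (Nat.sqrt T + 1 : ℕ) + T * (2 * Δ / (Nat.sqrt T + 1 : ℕ)) :=
          aliceRegret_sweepThenCommit_le (n := fun T => Nat.sqrt T + 1) T.sqrt.succ_pos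
            hA hpos hB hc
      _ ≤ (4 + 2 * Δ) * √T := two_mul_sqrt_succ_add_mul_div_le hT hΔ

/-- 2 cuts, myopic Bob, upper bound: for all `0 < δ ≤ Δ` there is `C > 0`
such that for every Alice value density there is a deterministic Alice strategy whose
Stackelberg regret against the myopic Bob is at most `C·√(T·log T)` for every Bob value
density and every horizon `T ≥ 2`. -/
theorem two_cut_myopic_upper (δ Δ : ℝ) (hδ : 0 < δ) (hδΔ : δ ≤ Δ) :
    ∃ C : ℝ, 0 < C ∧
      ∀ vA : ℝ → ℝ, IsValueDensity δ Δ vA →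
        ∃ SA : AliceStrategy 2, AliceValid 2 SA ∧
          ∀ vB : ℝ → ℝ, IsValueDensity δ Δ vB →
            ∀ T : ℕ, 2 ≤ T →
              aliceRegret 2 vA vB SA (myopicBob 2 vA vB) T ≤
                C * Real.sqrt (T * Real.log T) := by
  refine ⟨(4 + 2 * Δ) * 2, by linarith, fun vA hA => ?_⟩
  obtain ⟨SA, hvalid, hregret⟩ := two_cut_myopic_upper_general
    (hA.imp_right fun h => h.imp_left fun hbd x hx => Icc_subset_Icc_left hδ.le (hbd x hx))
  refine ⟨SA, hvalid, fun vB hB T hT => (hregret vB (fun x hx => hδ.trans_le (hB.2.1 x hx).1)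
    hB.2.2 _ (isMyopicRule_myopicBob 2 vA vB 0 []) T).trans ?_⟩
  rw [mul_assoc]
  exact mul_le_mul_of_nonneg_left (sqrt_le_two_mul_sqrt_mul_log (by exact_mod_cast hT))
    (by linarith)

end
end
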